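/- arXiv:2311.01082 — 2 statements merged into one kernel-verified Lean document; each statement's English description precedes it below -/
import Mathlib

section
/- For nonnegative integers p and r with p + r ≥ 2, the family 𝓕(H(p,0,r)) of all induced H(p,0,r)-free graphs is feasible if and only if p ≥ 3 and r ≥ 1. In particular, 𝓕(H(p,0,r)) is not feasible when p = 0 or r = 0, and not feasible when p ∈ {1,2} and r ≥ 1. -/
open SimpleGraph

/-- `(n, m)` is a feasible pair for a family `F` of finite simple graphs
(given, for each number of vertices `n`, as a predicate on simple graphs on `Fin n`):
some member of the family has exactly `n` vertices and exactly `m` edges. -/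
def FeasiblePair (F : ∀ n : ℕ, SimpleGraph (Fin n) → Prop) (n m : ℕ) : Prop :=
  ∃ G : SimpleGraph (Fin n), F n G ∧ G.edgeSet.ncard = m

/-- A family of finite simple graphs is feasible if every pair `(n, m)` with
`n ≥ 1` and `0 ≤ m ≤ n(n-1)/2` is feasible for it. -/
def Feasible (F : ∀ n : ℕ, SimpleGraph (Fin n) → Prop) : Prop :=
  ∀ n m : ℕ, 1 ≤ n → m ≤ n * (n - 1) / 2 → FeasiblePair F n m

/-- `G` is contained in `H` as an induced subgraph: there is an injective map of the
vertices of `G` into the vertices of `H` under which adjacency in `H` holds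
if and only if it holds in `G`. -/
def IndContains {α β : Type*} (G : SimpleGraph α) (H : SimpleGraph β) : Prop :=
  ∃ f : α ↪ β, ∀ a b : α, H.Adj (f a) (f b) ↔ G.Adj a b

/-- The family `𝓕(G)` of all induced `G`-free finite simple graphs. -/
def IndFreeFamily {α : Type*} (G : SimpleGraph α) :
    ∀ n : ℕ, SimpleGraph (Fin n) → Prop :=
  fun _ H => ¬ IndContains G H

/-- The graph `H(p,q,r) = (K_p ∖ K_{1,q}) ∪ rK_1`: the complete graph on the `p`
left-hand vertices, from which the `q` edges joining the vertex `0` to the vertices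
`1, …, q` have been removed, together with `r` isolated right-hand vertices. -/
def Hgraph (p q r : ℕ) : SimpleGraph (Fin p ⊕ Fin r) :=
  SimpleGraph.fromRel (fun a b =>
    ∃ i j : Fin p, a = Sum.inl i ∧ b = Sum.inl j ∧
      ¬ ((i.val = 0 ∧ 1 ≤ j.val ∧ j.val ≤ q) ∨ (j.val = 0 ∧ 1 ≤ i.val ∧ i.val ≤ q)))

/-!
If `H` is the only graph with its numbers of vertices and edges up to isomorphism, then that pair of
numbers is not feasible for `𝓕(H)`; this applies to edgeless graphs, complete graphs and graphs with
one edge, hence to `K_p ∪ rK_1` when `p ≤ 2` or `r = 0`.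

Conversely, `𝓕(H)` is feasible as soon as `H` has no universal vertex and no single vertex meets all
of its edges. By induction on `n`, a graph with `n + 1` vertices and `m` edges can be chosen to be a
star with isolated vertices added if `m ≤ n`, and the cone over a graph with `n` vertices and
`m - n` edges otherwise: an induced copy of `H` in a cone avoids the apex, which is universal.
-/

lemma indContains_iff_isIndContained {V W : Type*} {G : SimpleGraph V}
    {H : SimpleGraph W} : IndContains G H ↔ G ⊴ H :=
  ⟨fun ⟨f, hf⟩ => ⟨⟨f, hf _ _⟩⟩, fun ⟨f⟩ => ⟨f.toEmbedding, fun _ _ => f.map_adj_iff⟩⟩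

section Unique

variable {α V W : Type*}

lemma ncard_edgeSet_top [Finite V] :
    (⊤ : SimpleGraph V).edgeSet.ncard = Nat.card V * (Nat.card V - 1) / 2 := by
  classical
  have := Fintype.ofFinite V
  rw [← coe_edgeFinset, Set.ncard_coe_finset, card_edgeFinset_top_eq_card_choose_two,
    Nat.choose_two_right, Nat.card_eq_fintype_card]

lemma ncard_edgeSet_le [Finite V] (G : SimpleGraph V) :
    G.edgeSet.ncard ≤ Nat.card V * (Nat.card V - 1) / 2 :=
  ncard_edgeSet_top (V := V) ▸ Set.ncard_le_ncard (edgeSet_mono le_top)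

lemma eq_top_of_ncard_edgeSet_top_le [Finite V] {G : SimpleGraph V}
    (hG : (⊤ : SimpleGraph V).edgeSet.ncard ≤ G.edgeSet.ncard) : G = ⊤ :=
  edgeSet_injective (Set.eq_of_subset_of_ncard_le (edgeSet_mono le_top) hG)

lemma exists_eq_edge_of_ncard_edgeSet_eq_one {G : SimpleGraph V} (hG : G.edgeSet.ncard = 1) :
    ∃ u v, u ≠ v ∧ G = edge u v := by
  obtain ⟨⟨u, v⟩, he⟩ := Set.ncard_eq_one.mp hG
  have huv : G.Adj u v := by rw [← mem_edgeSet, he]; rfl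
  exact ⟨u, v, huv.ne, by rw [edge, ← G.fromEdgeSet_edgeSet, he]⟩

lemma nonempty_iso_edge (e : V ≃ W) {a b : V} {u v : W} (hab : a ≠ b) (huv : u ≠ v) :
    Nonempty (edge a b ≃g edge u v) := by
  have := Equiv.Perm.isMultiplyPretransitive W 2
  obtain ⟨σ, rfl, rfl⟩ :=
    MulAction.is_two_pretransitive_iff.mp this (e.injective.ne hab) huv
  exact ⟨e.trans σ, by simp [edge_adj]⟩

theorem not_feasible_indFreeFamily_of_unique [Finite α] [Nonempty α] {H : SimpleGraph α}
    (hH : ∀ G : SimpleGraph (Fin (Nat.card α)),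
      G.edgeSet.ncard = H.edgeSet.ncard → Nonempty (H ≃g G)) :
    ¬ Feasible (IndFreeFamily H) := by
  intro hF
  obtain ⟨G, hG, hm⟩ := hF _ _ Nat.card_pos (ncard_edgeSet_le H)
  obtain ⟨φ⟩ := hH G hm
  exact hG (indContains_iff_isIndContained.mpr ⟨φ.toEmbedding⟩)

lemma not_feasible_indFreeFamily_bot [Finite α] [Nonempty α] :
    ¬ Feasible (IndFreeFamily (⊥ : SimpleGraph α)) := by
  refine not_feasible_indFreeFamily_of_unique fun G hG => ?_
  obtain rfl : G = ⊥ := by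
    rwa [edgeSet_bot, Set.ncard_empty, Set.ncard_eq_zero, edgeSet_eq_empty] at hG
  exact ⟨Finite.equivFin α, by simp⟩

lemma not_feasible_indFreeFamily_top [Finite α] [Nonempty α] :
    ¬ Feasible (IndFreeFamily (⊤ : SimpleGraph α)) := by
  refine not_feasible_indFreeFamily_of_unique fun G hG => ?_
  obtain rfl : G = ⊤ := eq_top_of_ncard_edgeSet_top_le <| by
    rw [hG, ncard_edgeSet_top, ncard_edgeSet_top, Nat.card_fin]
  exact ⟨Iso.completeGraph (Finite.equivFin α)⟩

lemma not_feasible_indFreeFamily_edge [Finite α] {a b : α} (hab : a ≠ b) :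
    ¬ Feasible (IndFreeFamily (edge a b)) := by
  have : Nonempty α := ⟨a⟩
  refine not_feasible_indFreeFamily_of_unique fun G hG => ?_
  have hG_one : G.edgeSet.ncard = 1 := by
    rw [hG, edgeSet_edge_of_ne hab, Set.ncard_singleton]
  obtain ⟨u, v, huv, rfl⟩ := exists_eq_edge_of_ncard_edgeSet_eq_one hG_one
  exact nonempty_iso_edge (Finite.equivFin α) hab huv

end Unique

/-- The graph obtained from `G` by attaching a new vertex, encoded as `none`, whose set of
neighbours is `s`. Stars with isolated vertices are the case `G = ⊥`, and the cone over `G` is the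
case `s = Set.univ`. -/
def attachVertex {V : Type*} (G : SimpleGraph V) (s : Set V) : SimpleGraph (Option V) where
  Adj
    | none, none => False
    | none, some v => v ∈ s
    | some u, none => u ∈ s
    | some u, some v => G.Adj u v
  symm := ⟨by rintro (_ | u) (_ | v) h <;> first | exact h | exact G.adj_symm h⟩
  loopless := ⟨by rintro (_ | u) h <;> first | exact h | exact G.irrefl h⟩

namespace attachVertex

variable {α V : Type*} {H : SimpleGraph α} {G : SimpleGraph V} {s : Set V} {u v : V}

@[simp] lemma adj_none_some : (attachVertex G s).Adj none (some v) ↔ v ∈ s := Iff.rfl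

@[simp] lemma adj_some_none : (attachVertex G s).Adj (some v) none ↔ v ∈ s := Iff.rfl

@[simp] lemma adj_some_some : (attachVertex G s).Adj (some u) (some v) ↔ G.Adj u v := Iff.rfl

lemma edgeSet_eq :
    (attachVertex G s).edgeSet = Sym2.map some '' G.edgeSet ∪ (s(none, some ·)) '' s := by
  ext ⟨x, y⟩
  obtain _ | u := x <;> obtain _ | v := y
  case some.some =>
    have hmap : s(u, v) ∈ G.edgeSet ↔ Sym2.map some s(u, v) ∈ Sym2.map some '' G.edgeSet :=
      (Sym2.map.injective (Option.some_injective V)).mem_set_image.symm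
    simpa using hmap
  all_goals simp [Sym2.exists]

lemma ncard_edgeSet [Finite V] :
    (attachVertex G s).edgeSet.ncard = G.edgeSet.ncard + s.ncard := by
  have hdisj : Disjoint (Sym2.map some '' G.edgeSet) ((s(none, some ·)) '' s) := by
    rw [Set.disjoint_left]
    rintro _ ⟨⟨u, v⟩, -, rfl⟩ ⟨w, -, hw⟩
    simp at hw
  have hinj : Function.Injective fun v : V => s(none, some v) := by
    intro u v huv
    simpa using huv
  rw [edgeSet_eq, Set.ncard_union_eq hdisj,
    Set.ncard_image_of_injective _ (Sym2.map.injective (Option.some_injective V)),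
    Set.ncard_image_of_injective _ hinj]

lemma vertexCoverNum_bot_le : (attachVertex (⊥ : SimpleGraph V) s).vertexCoverNum ≤ 1 := by
  have hcover : (attachVertex (⊥ : SimpleGraph V) s).IsVertexCover {none} := by
    rintro (_ | u) (_ | v) h <;> simp_all
  exact Set.encard_singleton (none : Option V) ▸ hcover.vertexCoverNum_le

lemma isUniversal_none : (attachVertex G Set.univ).IsUniversal none := by
  rintro (_ | v) h
  · exact absurd rfl h
  · exact Set.mem_univ v

lemma isIndContained_of_isIndContained_univ (hH : ∀ v, ¬ H.IsUniversal v)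
    (h : H ⊴ attachVertex G Set.univ) : H ⊴ G := by
  obtain ⟨f⟩ := h
  have hf_ne_none (a : α) : f a ≠ none := fun ha => hH a fun b hab =>
    f.map_adj_iff.mp (ha ▸ isUniversal_none (ha ▸ f.injective.ne hab))
  choose g hg using fun a => Option.ne_none_iff_exists'.mp (hf_ne_none a)
  refine ⟨⟨⟨g, fun a b hab => f.injective (by rw [hg, hg, hab])⟩, fun {a b} => ?_⟩⟩
  rw [← f.map_adj_iff, hg, hg]
  rfl

end attachVertex

section Feasible

variable {α V : Type*} {H : SimpleGraph α}

lemma feasiblePair_indFreeFamily_of_not_isIndContained [Finite V] {G : SimpleGraph V}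
    (hG : ¬ H ⊴ G) : FeasiblePair (IndFreeFamily H) (Nat.card V) G.edgeSet.ncard := by
  have := Fintype.ofFinite V
  let φ := G.overFinIso Nat.card_eq_fintype_card.symm
  refine ⟨_, fun h => hG ?_, (Nat.card_congr φ.mapEdgeSet).symm⟩
  exact (indContains_iff_isIndContained.mp h).trans ⟨φ.symm.toEmbedding⟩

lemma feasiblePair_indFreeFamily_of_le (hcover : 1 < H.vertexCoverNum) {n m : ℕ} (hm : m ≤ n) :
    FeasiblePair (IndFreeFamily H) (n + 1) m := by
  obtain ⟨s, -, hs⟩ := Set.exists_subset_card_eq (s := (Set.univ : Set (Fin n)))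
    (by simpa [Set.ncard_univ] using hm)
  have hfree : ¬ H ⊴ attachVertex ⊥ s := fun h => hcover.not_ge
    (h.isContained.vertexCoverNum_le_vertexCoverNum.trans attachVertex.vertexCoverNum_bot_le)
  simpa [attachVertex.ncard_edgeSet, hs] using
    feasiblePair_indFreeFamily_of_not_isIndContained hfree

lemma FeasiblePair.cone (huniv : ∀ v, ¬ H.IsUniversal v) {n m : ℕ}
    (h : FeasiblePair (IndFreeFamily H) n m) :
    FeasiblePair (IndFreeFamily H) (n + 1) (m + n) := by
  obtain ⟨G, hG, rfl⟩ := h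
  have hfree : ¬ H ⊴ attachVertex G Set.univ := fun h =>
    hG (indContains_iff_isIndContained.mpr
      (attachVertex.isIndContained_of_isIndContained_univ huniv h))
  simpa [attachVertex.ncard_edgeSet, Set.ncard_univ] using
    feasiblePair_indFreeFamily_of_not_isIndContained hfree

theorem feasible_indFreeFamily_of_one_lt_vertexCoverNum (hcover : 1 < H.vertexCoverNum)
    (huniv : ∀ v, ¬ H.IsUniversal v) : Feasible (IndFreeFamily H) := by
  intro n m hn hm
  induction n, hn using Nat.le_induction generalizing m with
  | base => exact feasiblePair_indFreeFamily_of_le hcover hm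
  | succ n _ ih =>
    obtain hmn | hnm := le_total m n
    · exact feasiblePair_indFreeFamily_of_le hcover hmn
    · rw [Nat.triangle_succ] at hm
      have hcone := (ih (m - n) (by lia)).cone huniv
      rwa [Nat.sub_add_cancel hnm] at hcone

end Feasible

lemma Hgraph_zero_eq_sum (p r : ℕ) : Hgraph p 0 r = ⊤ ⊕g ⊥ := by
  ext (i | i) (j | j)
  case inl.inl => simp only [Hgraph, fromRel_adj, sum_adj_inl, top_adj]; grind
  all_goals simp [Hgraph]

section CompleteSumEmpty

variable {V W : Type*}

lemma top_sum_bot_eq_bot [Subsingleton V] :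
    ((⊤ : SimpleGraph V) ⊕g (⊥ : SimpleGraph W)) = ⊥ := by
  ext (u | u) (v | v) <;> simp [eq_iff_true_of_subsingleton]

lemma top_sum_bot_eq_top [IsEmpty W] : ((⊤ : SimpleGraph V) ⊕g (⊥ : SimpleGraph W)) = ⊤ := by
  ext (u | w) (v | w')
  · simp
  · exact isEmptyElim w'
  all_goals exact isEmptyElim w

lemma top_fin_two_sum_bot_eq_edge :
    ((⊤ : SimpleGraph (Fin 2)) ⊕g (⊥ : SimpleGraph W)) = edge (.inl 0) (.inl 1) := by
  ext (u | u) (v | v)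
  case inl.inl => fin_cases u <;> fin_cases v <;> simp [edge_adj]
  all_goals simp [edge_adj]

lemma card_sub_one_le_vertexCoverNum_top_sum (G : SimpleGraph W) :
    ENat.card V - 1 ≤ ((⊤ : SimpleGraph V) ⊕g G).vertexCoverNum :=
  vertexCoverNum_top (V := V) ▸
    Embedding.sumInl.isIndContained.isContained.vertexCoverNum_le_vertexCoverNum

lemma not_isUniversal_sum [Nonempty V] [Nonempty W] (G : SimpleGraph V) (G' : SimpleGraph W)
    (x : V ⊕ W) : ¬ (G ⊕g G').IsUniversal x := by
  intro hx
  obtain v | w := x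
  · simpa using hx (w := .inr (Classical.arbitrary W)) (by simp)
  · simpa using hx (w := .inl (Classical.arbitrary V)) (by simp)

end CompleteSumEmpty

/-- For `p + r ≥ 2`, the family `𝓕(H(p,0,r))` of all graphs with no induced copy of
`K_p ∪ rK_1` is feasible if and only if `p ≥ 3` and `r ≥ 1`; in particular it is not
feasible when `p = 0` or `r = 0`, nor when `p ∈ {1, 2}` and `r ≥ 1`. -/
theorem feasible_indFreeFamily_Hp0r_iff (p r : ℕ) (hpr : 2 ≤ p + r) :
    Feasible (IndFreeFamily (Hgraph p 0 r)) ↔ (3 ≤ p ∧ 1 ≤ r) := by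
  rw [Hgraph_zero_eq_sum]
  constructor
  · intro hF
    by_contra hsmall
    have : Nonempty (Fin p ⊕ Fin r) := by
      rw [nonempty_sum, ← Fin.pos_iff_nonempty, ← Fin.pos_iff_nonempty]
      lia
    obtain hp | rfl | rfl : p ≤ 1 ∨ r = 0 ∨ p = 2 := by lia
    · have := Fin.subsingleton_iff_le_one.mpr hp
      exact not_feasible_indFreeFamily_bot (top_sum_bot_eq_bot (V := Fin p) ▸ hF)
    · exact not_feasible_indFreeFamily_top (top_sum_bot_eq_top (W := Fin 0) ▸ hF)
    · exact not_feasible_indFreeFamily_edge (by simp) (top_fin_two_sum_bot_eq_edge ▸ hF)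
  · rintro ⟨hp, hr⟩
    have : Nonempty (Fin p) := ⟨0, by lia⟩
    have : Nonempty (Fin r) := ⟨0, hr⟩
    have hcard : (1 : ℕ∞) < ENat.card (Fin p) - 1 := by
      rw [ENat.card_eq_coe_fintype_card, Fintype.card_fin]
      exact_mod_cast Nat.lt_sub_of_add_lt hp
    exact feasible_indFreeFamily_of_one_lt_vertexCoverNum
      (hcard.trans_le (card_sub_one_le_vertexCoverNum_top_sum _)) (not_isUniversal_sum _ _)
end

section
/- For every integer n ≥ 5 and every integer m with ⌊n/2⌋ + 1 ≤ m ≤ n − 2, every finite simple graph on n vertices with exactly n(n−1)/2 − m edges contains an induced copy of the Paw or an induced copy of the Claw; that is, the pair (n, n(n−1)/2 − m) is not feasible for the family 𝓕(Paw, Claw). -/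
open SimpleGraph

/-- The Paw: a triangle on the vertices `0, 1, 2` with the pendant edge `{2, 3}`. -/
def pawGraph : SimpleGraph (Fin 4) :=
  SimpleGraph.fromEdgeSet {s(0, 1), s(0, 2), s(1, 2), s(2, 3)}

/-- The Claw `K_{1,3}`: the center `0` joined to the three leaves `1, 2, 3`. -/
def clawGraph : SimpleGraph (Fin 4) :=
  SimpleGraph.fromEdgeSet {s(0, 1), s(0, 2), s(0, 3)}

/-- `P_3 ∪ K_1`: the path `0 - 1 - 2` on three vertices plus the isolated vertex `3`. -/
def p3k1Graph : SimpleGraph (Fin 4) :=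
  SimpleGraph.fromEdgeSet {s(0, 1), s(1, 2)}

/-- `K_3 ∪ K_1`: the triangle on `0, 1, 2` plus the isolated vertex `3`. -/
def k3k1Graph : SimpleGraph (Fin 4) :=
  SimpleGraph.fromEdgeSet {s(0, 1), s(0, 2), s(1, 2)}

/-! A graph with `m` missing edges is studied through its complement. If `n < 2 * m`, some vertex
`v` has two neighbours `a`, `b` in the complement; if `m + 1 < n`, the complement is disconnected,
so some `w` lies outside the component of `v` and is therefore joined to `v`, `a` and `b` in the
graph itself. Then `{v, a, b, w}` induces a paw or a claw according to whether `a` and `b` are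
adjacent. -/

section

variable {V : Type*}

theorem indContains_of_lt {α : Type*} [LinearOrder α] {G : SimpleGraph α} {H : SimpleGraph V}
    (f : α → V) (hne : ∀ i j, i < j → f i ≠ f j)
    (hadj : ∀ i j, i < j → (H.Adj (f i) (f j) ↔ G.Adj i j)) : IndContains G H := by
  refine ⟨⟨f, .of_lt_imp_ne hne⟩, fun i j => ?_⟩
  rw [Function.Embedding.coeFn_mk]
  rcases lt_trichotomy i j with hij | rfl | hji
  · exact hadj i j hij
  · exact iff_of_false H.irrefl G.irrefl
  · rw [H.adj_comm, G.adj_comm, hadj j i hji]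

theorem indContains_pawGraph {H : SimpleGraph V} {a b c d : V} (hab : H.Adj a b)
    (hac : H.Adj a c) (hbc : H.Adj b c) (hcd : H.Adj c d) (had : Hᶜ.Adj a d)
    (hbd : Hᶜ.Adj b d) : IndContains pawGraph H := by
  refine indContains_of_lt ![a, b, c, d] (fun i j hij => ?_) fun i j hij => ?_
  · fin_cases i <;> fin_cases j <;>
      simp [hab.ne, hac.ne, hbc.ne, hcd.ne, had.ne, hbd.ne] at hij ⊢
  · rw [compl_adj] at had hbd
    fin_cases i <;> fin_cases j <;>
      simp [pawGraph, hab, hac, hbc, hcd, had.2, hbd.2] at hij ⊢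

theorem indContains_clawGraph {H : SimpleGraph V} {c x y z : V} (hcx : H.Adj c x)
    (hcy : H.Adj c y) (hcz : H.Adj c z) (hxy : Hᶜ.Adj x y) (hxz : Hᶜ.Adj x z)
    (hyz : Hᶜ.Adj y z) : IndContains clawGraph H := by
  refine indContains_of_lt ![c, x, y, z] (fun i j hij => ?_) fun i j hij => ?_
  · fin_cases i <;> fin_cases j <;>
      simp [hcx.ne, hcy.ne, hcz.ne, hxy.ne, hxz.ne, hyz.ne] at hij ⊢
  · rw [compl_adj] at hxy hxz hyz
    fin_cases i <;> fin_cases j <;>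
      simp [clawGraph, hcx, hcy, hcz, hxy.2, hxz.2, hyz.2] at hij ⊢

theorem indContains_pawGraph_or_clawGraph_of_not_connected_compl {H : SimpleGraph V} {v : V}
    (hv : (Hᶜ.neighborSet v).Nontrivial) (hH : ¬ Hᶜ.Connected) :
    IndContains pawGraph H ∨ IndContains clawGraph H := by
  obtain ⟨a, hva : Hᶜ.Adj v a, b, hvb : Hᶜ.Adj v b, hab⟩ := hv
  obtain ⟨w, hw⟩ : ∃ w, ¬ Hᶜ.Reachable v w := by
    by_contra! h
    exact hH ((connected_iff_exists_forall_reachable Hᶜ).mpr ⟨v, h⟩)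
  have adj_w {x : V} (hx : Hᶜ.Reachable v x) : H.Adj x w :=
    compl_compl H ▸ (Hᶜ.reachable_or_compl_adj x w).resolve_left fun h => hw (hx.trans h)
  have hvw : H.Adj v w := adj_w (Reachable.refl v)
  have haw : H.Adj a w := adj_w hva.reachable
  have hbw : H.Adj b w := adj_w hvb.reachable
  by_cases h : H.Adj a b
  · exact .inl (indContains_pawGraph h haw hbw hvw.symm hva.symm hvb.symm)
  · exact .inr (indContains_clawGraph hvw.symm haw.symm hbw.symm hva hvb
      ((compl_adj H a b).mpr ⟨hab, h⟩))

theorem exists_nontrivial_neighborSet_of_card_lt [Finite V] {G : SimpleGraph V}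
    (h : Nat.card V < 2 * G.edgeSet.ncard) : ∃ v, (G.neighborSet v).Nontrivial := by
  classical
  have := Fintype.ofFinite V
  have hsum : ∑ _v : V, 1 < ∑ v, G.degree v := by
    rwa [G.sum_degrees_eq_twice_card_edges, ← Set.ncard_coe_finset, coe_edgeFinset,
      ← Fintype.card_eq_sum_ones, ← Nat.card_eq_fintype_card]
  obtain ⟨v, -, hv⟩ := Finset.exists_lt_of_sum_lt hsum
  refine ⟨v, ?_⟩
  rw [← coe_neighborFinset]
  exact Finset.one_lt_card_iff_nontrivial.mp hv

theorem ncard_edgeSet_add_ncard_edgeSet_compl [Finite V] (G : SimpleGraph V) :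
    G.edgeSet.ncard + Gᶜ.edgeSet.ncard = (Nat.card V).choose 2 := by
  classical
  have := Fintype.ofFinite V
  calc G.edgeSet.ncard + Gᶜ.edgeSet.ncard
      = (G.edgeSet ∪ Gᶜ.edgeSet).ncard :=
        (Set.ncard_union_eq (disjoint_edgeSet.mpr disjoint_compl_right)).symm
    _ = (⊤ : SimpleGraph V).edgeSet.ncard := by rw [← edgeSet_sup, sup_compl_eq_top]
    _ = (Nat.card V).choose 2 := by
        rw [← coe_edgeFinset, Set.ncard_coe_finset, card_edgeFinset_top_eq_card_choose_two,
          Nat.card_eq_fintype_card]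

theorem forces_paw_or_claw_general {n m : ℕ} (hm1 : n / 2 + 1 ≤ m) (hm2 : m ≤ n - 2)
    [Finite V] (hV : Nat.card V = n) (H : SimpleGraph V)
    (hH : H.edgeSet.ncard = n * (n - 1) / 2 - m) :
    IndContains pawGraph H ∨ IndContains clawGraph H := by
  have hcompl : Hᶜ.edgeSet.ncard = m := by
    have hadd := ncard_edgeSet_add_ncard_edgeSet_compl H
    rw [hV, Nat.choose_two_right] at hadd
    -- so that `n * (n - 1) / 2 - m` does not truncate
    have hmul : 2 * (n - 1) ≤ n * (n - 1) := Nat.mul_le_mul_right _ (by lia)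
    lia
  obtain ⟨v, hv⟩ : ∃ v, (Hᶜ.neighborSet v).Nontrivial :=
    exists_nontrivial_neighborSet_of_card_lt (by lia)
  refine indContains_pawGraph_or_clawGraph_of_not_connected_compl hv fun hconn => ?_
  have hcard : Nat.card V ≤ Hᶜ.edgeSet.ncard + 1 := hconn.card_vert_le_card_edgeSet_add_one
  lia

end

/-- For `n ≥ 5` and `⌊n/2⌋ + 1 ≤ m ≤ n - 2`, every graph on `n` vertices with exactly
`n(n-1)/2 - m` edges contains an induced Paw or an induced Claw; that is, the pair
`(n, n(n-1)/2 - m)` is not feasible for the family `𝓕(Paw, Claw)`. -/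
theorem forces_paw_or_claw (n m : ℕ) (hn : 5 ≤ n) (hm1 : n / 2 + 1 ≤ m)
    (hm2 : m ≤ n - 2) :
    (∀ (V : Type) [Fintype V], Fintype.card V = n → ∀ H : SimpleGraph V,
      H.edgeSet.ncard = n * (n - 1) / 2 - m →
        IndContains pawGraph H ∨ IndContains clawGraph H) ∧
    ¬ FeasiblePair (fun _ H => ¬ IndContains pawGraph H ∧ ¬ IndContains clawGraph H) n
        (n * (n - 1) / 2 - m) :=
  ⟨fun _ _ hV => forces_paw_or_claw_general hm1 hm2 (Nat.card_eq_fintype_card.trans hV),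
    fun ⟨G, ⟨hpaw, hclaw⟩, hG⟩ =>
      (forces_paw_or_claw_general hm1 hm2 (Nat.card_fin n) G hG).elim hpaw hclaw⟩
end
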